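/- The infinite series identity 9π²/4 = Σ_{k=0}^{∞} (1/64)^k · [(1/2)_k (1)_k (1)_k (1)_k] / [(5/4)_k (5/4)_k (7/4)_k (7/4)_k] · (42k² + 61k + 22) holds, where the sum is over natural numbers k and all quantities are real numbers. -/

import Mathlib

noncomputable def risingFactorial (a : ℝ) (k : ℕ) : ℝ := ∏ i ∈ Finset.range k, (a + i)

open Filter Topology Finset

/-- the WZ summand on the diagonal path -/
noncomputable def wzF : ℕ → ℕ → ℝ
  | 0, j => 1 / ((j:ℝ) + 1/2)^2
  | n+1, j => wzF n j * (((n:ℝ)+1)^3 * ((j:ℝ)+1/2+n)^2 /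
      (2*(2*(n:ℝ)+1) * ((j:ℝ)+1/2+2*n+1)^2 * ((j:ℝ)+1/2+2*n+2)^2))

noncomputable def wzG (n j : ℕ) : ℝ :=
  wzF n j * (((n:ℝ)+1)^3 / (2*(2*(n:ℝ)+1) * ((j:ℝ)+1/2+2*n+1)^2)
    + (2*((j:ℝ)+1/2)+5*n+1) / (2*(2*(n:ℝ)+1)))

lemma wzF_nonneg (n j : ℕ) : 0 ≤ wzF n j := by
  induction n with
  | zero => unfold wzF; positivity
  | succ n ih => unfold wzF; positivity

lemma wzG_nonneg (n j : ℕ) : 0 ≤ wzG n j := by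
  have := wzF_nonneg n j
  unfold wzG; positivity

lemma wzF_shift (n j : ℕ) :
    wzF n (j+1) = wzF n j * (((j:ℝ)+1/2+n)^2 / ((j:ℝ)+1/2+2*n+1)^2) := by
  have hj : (0:ℝ) ≤ j := j.cast_nonneg
  induction n with
  | zero =>
    unfold wzF
    push_cast
    have h1 : (j:ℝ)+1/2 ≠ 0 := by positivity
    have h2 : (j:ℝ)+1/2+1 ≠ 0 := by positivity
    have h3 : (j:ℝ)+1+1/2 = j+1/2+1 := by ring
    rw [h3]
    generalize (j:ℝ)+1/2 = x at *
    simp only [mul_zero, add_zero]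
    field_simp
  | succ n ih =>
    have hn : (0:ℝ) ≤ n := n.cast_nonneg
    unfold wzF
    rw [ih]
    push_cast
    have h0 : (j:ℝ)+1/2 > 0 := by positivity
    have h3 : (j:ℝ)+1+1/2 = j+1/2+1 := by ring
    rw [h3]
    generalize (j:ℝ)+1/2 = x at *
    have e1 : x + 1 + 2*(n:ℝ) + 1 = x + 2*n+2 := by ring
    have e2 : x + 1 + 2*(n:ℝ) + 2 = x + 2*n+3 := by ring
    have e3 : x + 2*((n:ℝ)+1) + 1 = x + 2*n+3 := by ring
    have e4 : x + ((n:ℝ)+1) = x + 1 + n := by ring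
    rw [e1, e2, e3, e4]
    have p1 : x + 2*(n:ℝ)+1 ≠ 0 := by positivity
    have p2 : x + 2*(n:ℝ)+2 ≠ 0 := by positivity
    have p3 : x + 2*(n:ℝ)+3 ≠ 0 := by positivity
    have p4 : 2*(n:ℝ)+1 ≠ 0 := by positivity
    field_simp

lemma wz_eq (n j : ℕ) : wzF (n+1) j - wzF n j = wzG n (j+1) - wzG n j := by
  have hn : (0:ℝ) ≤ n := n.cast_nonneg
  unfold wzG
  rw [wzF_shift]
  simp only [wzF]
  push_cast
  have h0 : (j:ℝ)+1/2 > 0 := by positivity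
  have h3 : (j:ℝ)+1+1/2 = j+1/2+1 := by ring
  rw [h3]
  generalize (j:ℝ)+1/2 = x at *
  have e1 : x + 1 + 2*(n:ℝ) + 1 = x + 2*n+2 := by ring
  rw [e1]
  have p1 : x + 2*(n:ℝ)+1 ≠ 0 := by positivity
  have p2 : x + 2*(n:ℝ)+2 ≠ 0 := by positivity
  have p4 : 2*(n:ℝ)+1 ≠ 0 := by positivity
  field_simp
  ring

lemma wz_tel_j (n J : ℕ) : wzG n 0 = wzG n J +
    ((∑ j ∈ range J, wzF n j) - ∑ j ∈ range J, wzF (n+1) j) := by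
  induction J with
  | zero => simp
  | succ J ih =>
    rw [sum_range_succ, sum_range_succ]
    have := wz_eq n J
    linarith

lemma wz_tel (N J : ℕ) : ∑ n ∈ range N, wzG n 0 = ∑ n ∈ range N, wzG n J +
    ((∑ j ∈ range J, wzF 0 j) - ∑ j ∈ range J, wzF N j) := by
  induction N with
  | zero => simp
  | succ N ih =>
    rw [sum_range_succ, sum_range_succ, ih]
    have := wz_tel_j N J
    linarith

lemma wzF_le (n j : ℕ) : wzF n j ≤ (1/8)^n * wzF 0 j := by
  induction n with
  | zero => simp
  | succ n ih =>
    have hn : (0:ℝ) ≤ n := n.cast_nonneg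
    have h0 : (j:ℝ)+1/2 > 0 := by positivity
    have key : ((n:ℝ)+1)^3 * ((j:ℝ)+1/2+n)^2 /
      (2*(2*(n:ℝ)+1) * ((j:ℝ)+1/2+2*n+1)^2 * ((j:ℝ)+1/2+2*n+2)^2) ≤ 1/8 := by
      generalize (j:ℝ)+1/2 = x at *
      rw [div_le_iff₀ (by positivity)]
      have a1 : (x+n)^2 ≤ (x+2*n+1)^2 := pow_le_pow_left₀ (by positivity) (by linarith) 2
      have a2 : (2*((n:ℝ)+1))^2 ≤ (x+2*n+2)^2 := by gcongr; linarith
      have a3 : ((n:ℝ)+1)^3 ≤ 1/8 * (2*(2*(n:ℝ)+1) * (x+2*n+2)^2) := by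
        calc ((n:ℝ)+1)^3 ≤ 1/8 * (2*(2*(n:ℝ)+1) * (2*((n:ℝ)+1))^2) := by
              nlinarith [sq_nonneg ((n:ℝ)+1), mul_nonneg hn (sq_nonneg ((n:ℝ)+1))]
          _ ≤ _ := by gcongr
      calc ((n:ℝ)+1)^3 * (x+n)^2 ≤ (1/8 * (2*(2*(n:ℝ)+1) * (x+2*n+2)^2)) * (x+2*n+1)^2 := by
            gcongr
        _ = _ := by ring
    calc wzF (n+1) j ≤ wzF n j * (1/8) := by
          rw [wzF]; exact mul_le_mul_of_nonneg_left key (wzF_nonneg n j)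
      _ ≤ ((1/8)^n * wzF 0 j) * (1/8) := by gcongr
      _ = _ := by ring

lemma wzG_tendsto (n : ℕ) : Tendsto (fun J => wzG n J) atTop (𝓝 0) := by
  have hn : (0:ℝ) ≤ n := n.cast_nonneg
  set K : ℝ := 2*((n:ℝ)+1)^3 + 2 + 10*n + 2 with hK
  have hlim : Tendsto (fun J : ℕ => K / ((J:ℝ)+1/2)) atTop (𝓝 0) :=
    Tendsto.div_atTop tendsto_const_nhds
      (tendsto_atTop_add_const_right _ _ tendsto_natCast_atTop_atTop)
  refine squeeze_zero (fun J => wzG_nonneg n J) (fun J => ?_) hlim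
  have hF : wzF n J ≤ 1 / ((J:ℝ)+1/2)^2 := by
    have h := wzF_le n J
    have h1 : ((1:ℝ)/8)^n ≤ 1 := pow_le_one₀ (by norm_num) (by norm_num)
    have h2 := mul_le_mul_of_nonneg_right h1 (wzF_nonneg 0 J)
    have h3 : wzF 0 J = 1 / ((J:ℝ)+1/2)^2 := by rw [wzF]
    linarith
  have hx : (1/2:ℝ) ≤ (J:ℝ)+1/2 := by have := J.cast_nonneg (α := ℝ); linarith
  unfold wzG
  have hF0 := wzF_nonneg n J
  generalize wzF n J = f at *
  generalize (J:ℝ)+1/2 = x at *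
  have hx0 : 0 < x := by linarith
  have b1 : ((n:ℝ)+1)^3 / (2*(2*(n:ℝ)+1) * (x+2*n+1)^2) ≤ ((n:ℝ)+1)^3 := by
    apply div_le_self (by positivity)
    have : 1 ≤ (x+2*n+1)^2 := one_le_pow₀ (by linarith)
    nlinarith
  have b2 : (2*x+5*n+1) / (2*(2*(n:ℝ)+1)) ≤ 2*x+5*n+1 := by
    apply div_le_self (by positivity)
    linarith
  have b3 : ((n:ℝ)+1)^3 + (2*x+5*n+1) ≤ K * x := by
    have : 0 ≤ ((n:ℝ)+1)^3 := by positivity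
    rw [hK]; nlinarith
  calc _ ≤ 1 / x^2 * (K * x) := by
        apply mul_le_mul hF (by linarith) (by positivity) (by positivity)
    _ = K / x := by field_simp

lemma hasSum_wzF_zero : HasSum (fun j => wzF 0 j) (Real.pi^2/2) := by
  have hz := hasSum_zeta_two
  have he : HasSum (fun k : ℕ => 1 / (((2*k : ℕ)):ℝ)^2) (Real.pi^2/6/4) := by
    have e : (fun k : ℕ => 1 / (((2*k : ℕ)):ℝ)^2) = fun k : ℕ => 1 / (k:ℝ)^2 / 4 := by
      funext k
      push_cast
      rw [mul_pow, div_div]; norm_num [mul_comm]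
    rw [e]
    exact hz.div_const 4
  have hs : Summable (fun k : ℕ => 1 / (((2*k+1 : ℕ)):ℝ)^2) :=
    hz.summable.comp_injective (i := fun k : ℕ => 2*k+1) (fun a b h => by simpa using h)
  have hsum := (he.even_add_odd (f := fun k : ℕ => 1 / (k:ℝ)^2) hs.hasSum).unique hz
  have h4 := hs.hasSum.mul_left 4
  have e : (fun j => wzF 0 j) = fun j : ℕ => 4 * (1 / (((2*j+1 : ℕ)):ℝ)^2) := by
    funext j
    rw [wzF]; push_cast
    have h1 : 2*(j:ℝ)+1 ≠ 0 := by positivity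
    have h2 : (j:ℝ)+1/2 = (2*j+1)/2 := by ring
    rw [h2]
    field_simp
    norm_num
  have e2 : Real.pi^2/2 = 4 * ∑' k : ℕ, 1 / (((2*k+1 : ℕ)):ℝ)^2 := by linarith
  rw [e, e2]
  exact h4

lemma wzG_partial (N : ℕ) : Real.pi^2/2 * (1 - (1/8)^N) ≤ ∑ n ∈ range N, wzG n 0 ∧
    ∑ n ∈ range N, wzG n 0 ≤ Real.pi^2/2 := by
  have h0 := hasSum_wzF_zero.tendsto_sum_nat
  have hG : Tendsto (fun J => ∑ n ∈ range N, wzG n J) atTop (𝓝 0) := by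
    simpa using tendsto_finsetSum (range N) (fun n _ => wzG_tendsto n)
  constructor
  · have hl := h0.mul_const (1 - (1/8:ℝ)^N)
    refine le_of_tendsto hl (Eventually.of_forall fun J => ?_)
    rw [wz_tel N J]
    have a : ∑ j ∈ range J, wzF N j ≤ (1/8)^N * ∑ j ∈ range J, wzF 0 j := by
      rw [mul_sum]; exact sum_le_sum fun j _ => wzF_le N j
    have b : 0 ≤ ∑ n ∈ range N, wzG n J := sum_nonneg fun n _ => wzG_nonneg n J
    nlinarith
  · have hr := hG.add h0
    rw [zero_add] at hr
    refine ge_of_tendsto hr (Eventually.of_forall fun J => ?_)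
    rw [wz_tel N J]
    have a : 0 ≤ ∑ j ∈ range J, wzF N j := sum_nonneg fun j _ => wzF_nonneg N j
    linarith

lemma hasSum_wzG : HasSum (fun n => wzG n 0) (Real.pi^2/2) := by
  rw [hasSum_iff_tendsto_nat_of_nonneg (fun n => wzG_nonneg n 0)]
  refine tendsto_of_tendsto_of_tendsto_of_le_of_le ?_ tendsto_const_nhds
    (fun N => (wzG_partial N).1) (fun N => (wzG_partial N).2)
  have : Tendsto (fun N : ℕ => (1/8:ℝ)^N) atTop (𝓝 0) :=
    tendsto_pow_atTop_nhds_zero_of_lt_one (by norm_num) (by norm_num)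
  simpa using (this.const_sub 1).const_mul (Real.pi^2/2)

lemma rf_succ (a : ℝ) (k : ℕ) : risingFactorial a (k+1) = risingFactorial a k * (a + k) := by
  unfold risingFactorial; rw [prod_range_succ]

lemma rf_pos (a : ℝ) (ha : 0 < a) (k : ℕ) : 0 < risingFactorial a k := by
  unfold risingFactorial; exact prod_pos fun i _ => by positivity

lemma wzF_zero_right (k : ℕ) : wzF k 0 = (16/9) * (2*(k:ℝ)+3/2)^2 *
    ((1/64 : ℝ) ^ k * (risingFactorial (1/2) k * risingFactorial (1) k * risingFactorial (1) k * risingFactorial (1) k) /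
        (risingFactorial (5/4) k * risingFactorial (5/4) k * risingFactorial (7/4) k * risingFactorial (7/4) k)) := by
  induction k with
  | zero => simp [wzF, risingFactorial]; norm_num
  | succ k ih =>
    rw [wzF, ih]
    simp only [rf_succ]
    have h5 := (rf_pos (5/4) (by norm_num) k).ne'
    have h7 := (rf_pos (7/4) (by norm_num) k).ne'
    generalize risingFactorial (5/4) k = p5 at *
    generalize risingFactorial (7/4) k = p7 at *
    push_cast
    have q1 : (0:ℝ)+1/2+2*k+1 ≠ 0 := by positivity
    have q2 : (0:ℝ)+1/2+2*k+2 ≠ 0 := by positivity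
    have q3 : 2*(k:ℝ)+1 ≠ 0 := by positivity
    have q4 : 5/4+(k:ℝ) ≠ 0 := by positivity
    have q5 : 7/4+(k:ℝ) ≠ 0 := by positivity
    have e1 : (0:ℝ)+1/2+2*k+1 = 2*(k+3/4) := by ring
    have e2 : (0:ℝ)+1/2+2*k+2 = 2*(5/4+k) := by ring
    have e3 : 2*((k:ℝ)+1)+3/2 = 2*(7/4+k) := by ring
    have e4 : 2*(k:ℝ)+3/2 = 2*(k+3/4) := by ring
    have q6 : (k:ℝ)+3/4 ≠ 0 := by positivity
    have e5 : (0:ℝ)+1/2+k = 1/2+k := by ring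
    have e6 : 2*(k:ℝ)+1 = 2*(1/2+k) := by ring
    have q7 : 1/2+(k:ℝ) ≠ 0 := by positivity
    rw [e1, e2, e3, e4, e5, e6, pow_succ]
    generalize hu : (k:ℝ)+3/4 = u at *
    generalize hv : 5/4+(k:ℝ) = v at *
    generalize hw : 7/4+(k:ℝ) = w at *
    generalize hs : 1/2+(k:ℝ) = s at *
    field_simp
    ring

theorem stmt_16 :
    9 * Real.pi ^ 2 / 4 =
      ∑' k : ℕ, (1/64 : ℝ) ^ k * (risingFactorial (1/2) k * risingFactorial (1) k * risingFactorial (1) k * risingFactorial (1) k) /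
        (risingFactorial (5/4) k * risingFactorial (5/4) k * risingFactorial (7/4) k * risingFactorial (7/4) k) * (42 * (k:ℝ)^2 + 61 * (k:ℝ) + 22) := by
  have h := hasSum_wzG.mul_left (9/2)
  have e : 9 * Real.pi ^ 2 / 4 = 9/2 * (Real.pi^2/2) := by ring
  rw [e, ← h.tsum_eq]
  congr 1
  funext k
  rw [wzG, wzF_zero_right]
  generalize ((1/64 : ℝ) ^ k * (risingFactorial (1/2) k * risingFactorial (1) k * risingFactorial (1) k * risingFactorial (1) k) /
        (risingFactorial (5/4) k * risingFactorial (5/4) k * risingFactorial (7/4) k * risingFactorial (7/4) k)) = P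
  push_cast
  have e1 : (0:ℝ)+1/2+2*k+1 = 2*k+3/2 := by ring
  rw [e1]
  have q1 : 2*(k:ℝ)+3/2 ≠ 0 := by positivity
  have q3 : 2*(k:ℝ)+1 ≠ 0 := by positivity
  field_simp
  ring
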